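/- Let d ≥ 1 and α = 1, and suppose the limit γ_d := lim_{N→∞} (1/log N) Σ_{0<‖z‖≤N} z₁ p(z) exists in ℝ. Then for every a ∈ ℝ^d and β ∈ ℝ, lim_{N→∞} (N/log N) · Σ_{z∈ℤ^d, z≠0} p(z) (e^{iβ(z·a)/N} − 1) = iβ a₁ γ_d, where a₁ is the first coordinate of a and the limit is in ℂ. -/

import Mathlib

/-- Euclidean norm of a point of `ℤ^d`. -/
noncomputable def znorm (d : ℕ) (z : Fin d → ℤ) : ℝ :=
  Real.sqrt (∑ i, ((z i : ℝ)) ^ 2)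

/-- The jump kernel `p(z) = ‖z‖^{-(d+α)} (2·1_{z₁>0} + 1_{z₁=0})`, `p(0) = 0`. -/
noncomputable def pker (d : ℕ) [NeZero d] (α : ℝ) (z : Fin d → ℤ) : ℝ :=
  if z = 0 then 0
  else znorm d z ^ (-((d : ℝ) + α)) *
    ((if 0 < z 0 then (2 : ℝ) else 0) + (if z 0 = 0 then 1 else 0))

/-!
Write `ψ(θ) = Σ p(z) (e^{i z·θ} - 1)` and let `m(R) = Σ_{‖z‖ ≤ R} z p(z)` be the truncated mean.
Removing the linear part of the exponential on the ball of radius `R` leaves, for each `z`, a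
remainder of size at most a constant multiple of `p(z) min(1, (‖z‖/R)²)`, as long as `‖θ‖ R` stays
bounded. Since `p(z) ≤ 2 ‖z‖^{-(d+α)}`, balls of radius `1/2` around the lattice points compare
the sum of these remainders with `∫ ‖x‖^{-(d+α)} min(1, (‖x‖/R)²) dx` over `ℝ^d`, which is
finite for `0 < α < 2` and equals a multiple of `R^{-α}` by scaling. Hence
`ψ(θ) = i θ·m(R) + O(R^{-α})`. By reflection symmetry only the first coordinate of `m(R)` is
nonzero. For `α = 1`, `R = N` and `θ = β a / N`, multiplying by `N / log N` turns the error into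
`O(1 / log N)`.
-/

open MeasureTheory Metric Module Set Filter Topology

section SeparatedFamily

variable {ι E : Type*} [NormedAddCommGroup E] [MeasurableSpace E] [BorelSpace E]

theorem sum_mul_measureReal_ball_le_integral {μ : Measure E} [μ.IsAddHaarMeasure]
    [ProperSpace E] {δ : ℝ} {x : ι → E}
    (hx : Pairwise fun i j ↦ δ ≤ dist (x i) (x j)) {f : ι → ℝ} {g : E → ℝ}
    (hg : Integrable g μ) (hg0 : 0 ≤ g) (hfg : ∀ i, ∀ y ∈ ball (x i) (δ / 2), f i ≤ g y)
    (u : Finset ι) :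
    (∑ i ∈ u, f i) * μ.real (ball 0 (δ / 2)) ≤ ∫ y, g y ∂μ := by
  have ball_disjoint : (u : Set ι).Pairwise (Function.onFun Disjoint fun i ↦ ball (x i) (δ / 2)) :=
    fun i _ j _ hij ↦ ball_disjoint_ball (by linarith [hx hij])
  have le_ball (i : ι) : f i * μ.real (ball 0 (δ / 2)) ≤ ∫ y in ball (x i) (δ / 2), g y ∂μ := by
    rw [← Measure.addHaar_real_ball_center μ (x i)]
    exact setIntegral_ge_of_const_le_real measurableSet_ball measure_ball_lt_top.ne (hfg i)
      hg.integrableOn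
  calc (∑ i ∈ u, f i) * μ.real (ball 0 (δ / 2))
      ≤ ∑ i ∈ u, ∫ y in ball (x i) (δ / 2), g y ∂μ := by
        rw [Finset.sum_mul]
        exact Finset.sum_le_sum fun i _ ↦ le_ball i
    _ = ∫ y in ⋃ i ∈ u, ball (x i) (δ / 2), g y ∂μ :=
        (integral_biUnion_finset u (fun _ _ ↦ measurableSet_ball) ball_disjoint
          fun _ _ ↦ hg.integrableOn).symm
    _ ≤ ∫ y, g y ∂μ := setIntegral_le_integral hg (.of_forall hg0)

end SeparatedFamily

/-- The radial weight `r^{-s} min(1, (r/R)²)`: the tail `r^{-s}` beyond the scale `R`, and the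
second moment `r^{2-s}`, normalised by `R²`, below it. -/
noncomputable def cutoffWeight (s R r : ℝ) : ℝ :=
  r ^ (-s) * min 1 ((r / R) ^ 2)

section CutoffWeight

theorem cutoffWeight_zero_right (s R : ℝ) : cutoffWeight s R 0 = 0 := by
  simp [cutoffWeight]

theorem cutoffWeight_nonneg (s R : ℝ) {r : ℝ} (hr : 0 ≤ r) : 0 ≤ cutoffWeight s R r := by
  unfold cutoffWeight
  positivity

theorem cutoffWeight_eq_rpow_mul (s : ℝ) {R r : ℝ} (hR : 0 < R) (hr : 0 ≤ r) :
    cutoffWeight s R r = R ^ (-s) * cutoffWeight s 1 (R⁻¹ * r) := by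
  have hrpow : R ^ (-s) * (R⁻¹ * r) ^ (-s) = r ^ (-s) := by
    rw [← Real.mul_rpow hR.le (by positivity), mul_inv_cancel_left₀ hR.ne']
  rw [cutoffWeight, cutoffWeight, ← mul_assoc, hrpow, div_one, div_eq_inv_mul]

theorem cutoffWeight_le_mul {s r ρ : ℝ} (hs : 0 ≤ s) (R : ℝ) (hr : 0 < r) (hrρ : r ≤ 2 * ρ)
    (hρr : ρ ≤ 2 * r) : cutoffWeight s R r ≤ 2 ^ s * 4 * cutoffWeight s R ρ := by
  have hρ : 0 < ρ := by linarith
  have hrpow : r ^ (-s) ≤ 2 ^ s * ρ ^ (-s) := by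
    have : r ^ (-s) ≤ (ρ / 2) ^ (-s) :=
      Real.rpow_le_rpow_of_nonpos (by positivity) (by linarith) (by linarith)
    rwa [Real.div_rpow hρ.le zero_le_two, Real.rpow_neg zero_le_two, div_inv_eq_mul,
      mul_comm] at this
  have hsq : (r / R) ^ 2 ≤ 4 * (ρ / R) ^ 2 := by
    rw [div_pow, div_pow, ← mul_div_assoc]
    gcongr
    nlinarith
  have hmin : min 1 ((r / R) ^ 2) ≤ 4 * min 1 ((ρ / R) ^ 2) := by
    rw [mul_min_of_nonneg _ _ zero_le_four]
    exact min_le_min (by norm_num) hsq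
  calc cutoffWeight s R r ≤ 2 ^ s * ρ ^ (-s) * (4 * min 1 ((ρ / R) ^ 2)) :=
        mul_le_mul hrpow hmin (by positivity) (by positivity)
    _ = 2 ^ s * 4 * cutoffWeight s R ρ := by rw [cutoffWeight]; ring

theorem integrableOn_rpow_mul_min {α : ℝ} (hα₀ : 0 < α) (hα₂ : α < 2) :
    IntegrableOn (fun r : ℝ ↦ r ^ (-1 - α) * min 1 (r ^ 2)) (Ioi 0) := by
  rw [← Ioc_union_Ioi_eq_Ioi zero_le_one]
  refine IntegrableOn.union ?_ ?_
  · have h : IntegrableOn (fun r : ℝ ↦ r ^ (1 - α)) (Ioc 0 1) :=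
      (intervalIntegrable_iff_integrableOn_Ioc_of_le zero_le_one).mp
        (intervalIntegral.intervalIntegrable_rpow' (by linarith))
    refine h.congr_fun (fun r hr ↦ ?_) measurableSet_Ioc
    have hr1 : r ^ 2 ≤ 1 := pow_le_one₀ hr.1.le hr.2
    rw [min_eq_right hr1, ← Real.rpow_add_natCast hr.1.ne']
    norm_num
    ring_nf
  · refine (integrableOn_Ioi_rpow_of_lt (a := -1 - α) (by linarith) one_pos).congr_fun
      (fun r hr ↦ ?_) measurableSet_Ioi
    have hr1 : 1 ≤ r ^ 2 := one_le_pow₀ (le_of_lt hr)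
    simp only [min_eq_left hr1, mul_one]

theorem cutoffWeight_norm_le_of_mem_ball {E : Type*} [NormedAddCommGroup E] {s : ℝ} (hs : 0 ≤ s)
    (R : ℝ) {x y : E} (hx : x ≠ 0 → 1 ≤ ‖x‖) (hy : y ∈ ball x (1 / 2)) :
    cutoffWeight s R ‖x‖ ≤ 2 ^ s * 4 * cutoffWeight s R ‖y‖ := by
  rcases eq_or_ne x 0 with rfl | hx0
  · rw [norm_zero, cutoffWeight_zero_right]
    exact mul_nonneg (by positivity) (cutoffWeight_nonneg s R (norm_nonneg y))
  · have hx1 := hx hx0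
    have hxy : |‖y‖ - ‖x‖| < 1 / 2 := (abs_norm_sub_norm_le y x).trans_lt (mem_ball_iff_norm.mp hy)
    rw [abs_lt] at hxy
    exact cutoffWeight_le_mul hs R (by linarith) (by linarith) (by linarith)

variable {E : Type*} [NormedAddCommGroup E] [NormedSpace ℝ E]

theorem cutoffWeight_norm_eq_rpow_mul (s : ℝ) {R : ℝ} (hR : 0 < R) (x : E) :
    cutoffWeight s R ‖x‖ = R ^ (-s) * cutoffWeight s 1 ‖R⁻¹ • x‖ := by
  rw [cutoffWeight_eq_rpow_mul s hR (norm_nonneg x), norm_smul,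
    Real.norm_of_nonneg (inv_nonneg.mpr hR.le)]

variable [FiniteDimensional ℝ E]

section Integral

variable [MeasurableSpace E] [BorelSpace E] (μ : Measure E) [μ.IsAddHaarMeasure]

theorem integral_cutoffWeight_norm (α : ℝ) {R : ℝ} (hR : 0 < R) :
    ∫ x : E, cutoffWeight (finrank ℝ E + α) R ‖x‖ ∂μ =
      R ^ (-α) * ∫ x : E, cutoffWeight (finrank ℝ E + α) 1 ‖x‖ ∂μ := by
  simp only [cutoffWeight_norm_eq_rpow_mul _ hR]
  rw [integral_const_mul, Measure.integral_comp_inv_smul_of_nonneg μ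
      (fun x ↦ cutoffWeight (finrank ℝ E + α) 1 ‖x‖) hR.le, smul_eq_mul, ← mul_assoc,
    ← Real.rpow_add_natCast hR.ne']
  ring_nf

variable [Nontrivial E] {α : ℝ}

theorem integrable_cutoffWeight_norm (hα₀ : 0 < α) (hα₂ : α < 2) {R : ℝ} (hR : 0 < R) :
    Integrable (fun x : E ↦ cutoffWeight (finrank ℝ E + α) R ‖x‖) μ := by
  suffices Integrable (fun x : E ↦ cutoffWeight (finrank ℝ E + α) 1 ‖x‖) μ by
    simp only [cutoffWeight_norm_eq_rpow_mul _ hR]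
    exact (this.comp_smul (inv_ne_zero hR.ne')).const_mul _
  rw [integrable_fun_norm_addHaar μ (f := cutoffWeight (finrank ℝ E + α) 1)]
  refine (integrableOn_rpow_mul_min hα₀ hα₂).congr_fun (fun r (hr : 0 < r) ↦ ?_)
    measurableSet_Ioi
  have hexp : -1 - α = -(finrank ℝ E + α) + (finrank ℝ E - 1 : ℕ) := by
    rw [Nat.cast_sub (finrank_pos (R := ℝ) (M := E))]
    push_cast
    ring
  simp only [cutoffWeight, smul_eq_mul, div_one]
  rw [hexp, Real.rpow_add_natCast hr.ne']
  ring

end Integral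

theorem exists_tsum_cutoffWeight_norm_le [Nontrivial E] {ι : Type*} {x : ι → E}
    (hsep : Pairwise fun i j ↦ 1 ≤ dist (x i) (x j)) (hnorm : ∀ i, x i ≠ 0 → 1 ≤ ‖x i‖)
    {α : ℝ} (hα₀ : 0 < α) (hα₂ : α < 2) :
    ∃ C, ∀ R > 0, Summable (fun i ↦ cutoffWeight (finrank ℝ E + α) R ‖x i‖) ∧
      ∑' i, cutoffWeight (finrank ℝ E + α) R ‖x i‖ ≤ C * R ^ (-α) := by
  borelize E
  let μ : Measure E := Measure.addHaar
  set s : ℝ := finrank ℝ E + α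
  have hvol : 0 < μ.real (ball 0 (1 / 2)) :=
    ENNReal.toReal_pos (measure_ball_pos μ 0 (by norm_num)).ne' measure_ball_lt_top.ne
  let C : ℝ := 2 ^ s * 4 * (∫ y : E, cutoffWeight s 1 ‖y‖ ∂μ) / μ.real (ball 0 (1 / 2))
  refine ⟨C, fun R hR ↦ ?_⟩
  have sum_le (u : Finset ι) : ∑ i ∈ u, cutoffWeight s R ‖x i‖ ≤ C * R ^ (-α) := by
    have h := sum_mul_measureReal_ball_le_integral (μ := μ) hsep
      (f := fun i ↦ cutoffWeight s R ‖x i‖)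
      ((integrable_cutoffWeight_norm μ hα₀ hα₂ hR).const_mul (2 ^ s * 4))
      (fun y ↦ mul_nonneg (by positivity) (cutoffWeight_nonneg s R (norm_nonneg y)))
      (fun i y hy ↦ cutoffWeight_norm_le_of_mem_ball (by positivity) R (hnorm i) hy) u
    rw [integral_const_mul, integral_cutoffWeight_norm μ α hR, ← le_div_iff₀ hvol] at h
    exact h.trans_eq (by ring)
  have hsummable := summable_of_sum_le (fun i ↦ cutoffWeight_nonneg s R (norm_nonneg (x i))) sum_le
  exact ⟨hsummable, hsummable.tsum_le_of_sum_le sum_le⟩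

end CutoffWeight

section Exponential

theorem norm_exp_I_mul_sub_one_sub_le (x : ℝ) :
    ‖Complex.exp (Complex.I * x) - 1 - Complex.I * x‖ ≤ 2 * x ^ 2 := by
  have hx : ‖Complex.I * (x : ℂ)‖ = |x| := by simp
  rcases le_or_gt |x| 1 with h | h
  · have hquad := Complex.norm_exp_sub_one_sub_id_le (hx.trans_le h)
    rw [hx, sq_abs] at hquad
    linarith [sq_nonneg x]
  · have hlin := norm_sub_le (Complex.exp (Complex.I * x) - 1) (Complex.I * x)
    rw [hx] at hlin
    have hexp : ‖Complex.exp (Complex.I * x) - 1‖ ≤ |x| := Real.norm_exp_I_mul_ofReal_sub_one_le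
    nlinarith [sq_abs x]

theorem norm_exp_I_mul_sub_one_le_two (x : ℝ) : ‖Complex.exp (Complex.I * x) - 1‖ ≤ 2 := by
  rw [Complex.norm_exp_I_mul_ofReal_sub_one, norm_mul, Real.norm_two, Real.norm_eq_abs]
  linarith [Real.abs_sin_le_one (x / 2)]

theorem norm_exp_I_mul_sub_one_sub_ite_le {x A r R : ℝ} (hR : 0 < R) (hr : 0 ≤ r)
    (hx : |x| ≤ A * (r / R)) :
    ‖Complex.exp (Complex.I * x) - 1 - (if r ≤ R then Complex.I * x else 0)‖ ≤
      2 * (1 + A ^ 2) * min 1 ((r / R) ^ 2) := by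
  split_ifs with hrR
  · have hsq : x ^ 2 ≤ A ^ 2 * (r / R) ^ 2 := by
      rw [← mul_pow, ← sq_abs x]
      gcongr
    rw [min_eq_right (pow_le_one₀ (by positivity) ((div_le_one hR).mpr hrR))]
    linarith [norm_exp_I_mul_sub_one_sub_le x, sq_nonneg (r / R)]
  · rw [min_eq_left (one_le_pow₀ ((one_le_div hR).mpr (not_le.mp hrR).le)), sub_zero]
    linarith [norm_exp_I_mul_sub_one_le_two x, sq_nonneg A]

end Exponential

section Lattice

variable {d : ℕ}

/-- The inclusion of `ℤ^d` into Euclidean space, through which `znorm` becomes a norm. -/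
def latticePoint (z : Fin d → ℤ) : EuclideanSpace ℝ (Fin d) :=
  WithLp.toLp 2 fun i ↦ (z i : ℝ)

theorem norm_latticePoint (z : Fin d → ℤ) : ‖latticePoint z‖ = znorm d z := by
  simp [EuclideanSpace.norm_eq, latticePoint, znorm]

theorem latticePoint_sub (z w : Fin d → ℤ) :
    latticePoint (z - w) = latticePoint z - latticePoint w := by
  ext i
  simp [latticePoint]

theorem abs_apply_le_znorm (z : Fin d → ℤ) (i : Fin d) : |(z i : ℝ)| ≤ znorm d z :=
  (PiLp.norm_apply_le (latticePoint z) i).trans_eq (norm_latticePoint z)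

theorem znorm_nonneg (z : Fin d → ℤ) : 0 ≤ znorm d z := Real.sqrt_nonneg _

theorem one_le_znorm {z : Fin d → ℤ} (hz : z ≠ 0) : 1 ≤ znorm d z := by
  obtain ⟨i, hi⟩ := Function.ne_iff.mp hz
  have hzi : (1 : ℝ) ≤ |(z i : ℝ)| := by exact_mod_cast Int.one_le_abs hi
  exact hzi.trans (abs_apply_le_znorm z i)

theorem znorm_eq_zero {z : Fin d → ℤ} : znorm d z = 0 ↔ z = 0 := by
  refine ⟨fun h ↦ ?_, fun h ↦ by simp [h, znorm]⟩
  by_contra hz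
  linarith [one_le_znorm hz]

theorem abs_sum_mul_le_znorm_mul_norm (z : Fin d → ℤ) (θ : EuclideanSpace ℝ (Fin d)) :
    |∑ i, (z i : ℝ) * θ i| ≤ znorm d z * ‖θ‖ := by
  have h := abs_real_inner_le_norm θ (latticePoint z)
  rwa [PiLp.inner_apply, norm_latticePoint, mul_comm] at h

theorem finite_znorm_le (d : ℕ) (R : ℝ) : {z : Fin d → ℤ | znorm d z ≤ R}.Finite := by
  refine ((isCompact_closedBall (0 : Fin d → ℤ) R).finite_of_discrete).subset fun z hz ↦ ?_
  rw [mem_closedBall_zero_iff]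
  refine le_trans ?_ hz
  exact (pi_norm_le_iff_of_nonneg (znorm_nonneg z)).mpr (abs_apply_le_znorm z)

theorem summable_ite_znorm_le {E : Type*} [AddCommMonoid E] [TopologicalSpace E] (R : ℝ)
    (f : (Fin d → ℤ) → E) : Summable fun z ↦ if z ≠ 0 ∧ znorm d z ≤ R then f z else 0 :=
  summable_of_hasFiniteSupport <| (finite_znorm_le d R).subset fun _ hz ↦
    (ite_ne_right_iff.mp hz).1.2

/-- The reflection of `ℤ^d` in the `i`-th coordinate hyperplane. -/
def reflectCoord (i : Fin d) : Equiv.Perm (Fin d → ℤ) :=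
  Equiv.piCongrRight fun j ↦ if j = i then Equiv.neg ℤ else Equiv.refl ℤ

theorem reflectCoord_apply_self (i : Fin d) (z : Fin d → ℤ) : reflectCoord i z i = -z i := by
  simp [reflectCoord]

theorem reflectCoord_apply_of_ne {i j : Fin d} (hji : j ≠ i) (z : Fin d → ℤ) :
    reflectCoord i z j = z j := by
  simp [reflectCoord, hji]

theorem znorm_reflectCoord (i : Fin d) (z : Fin d → ℤ) :
    znorm d (reflectCoord i z) = znorm d z := by
  have hsq (j : Fin d) : ((reflectCoord i z j : ℤ) : ℝ) ^ 2 = (z j : ℝ) ^ 2 := by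
    rcases eq_or_ne j i with rfl | hji
    · rw [reflectCoord_apply_self, Int.cast_neg, neg_sq]
    · rw [reflectCoord_apply_of_ne hji]
  simp only [znorm, hsq]

theorem reflectCoord_eq_zero_iff {i : Fin d} {z : Fin d → ℤ} : reflectCoord i z = 0 ↔ z = 0 := by
  simp only [← znorm_eq_zero, znorm_reflectCoord]

theorem exists_tsum_cutoffWeight_znorm_le (d : ℕ) [NeZero d] {α : ℝ} (hα₀ : 0 < α) (hα₂ : α < 2) :
    ∃ C, ∀ R > 0, Summable (fun z : Fin d → ℤ ↦ cutoffWeight (d + α) R (znorm d z)) ∧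
      ∑' z : Fin d → ℤ, cutoffWeight (d + α) R (znorm d z) ≤ C * R ^ (-α) := by
  have hsep : Pairwise fun z w : Fin d → ℤ ↦ 1 ≤ dist (latticePoint z) (latticePoint w) := by
    intro z w hzw
    rw [dist_eq_norm, ← latticePoint_sub, norm_latticePoint]
    exact one_le_znorm (sub_ne_zero.mpr hzw)
  have hnorm (z : Fin d → ℤ) (hz : latticePoint z ≠ 0) : 1 ≤ ‖latticePoint z‖ := by
    rw [norm_latticePoint]
    exact one_le_znorm fun h ↦ hz (by ext; simp [latticePoint, h])
  simpa only [finrank_euclideanSpace_fin, norm_latticePoint] using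
    exists_tsum_cutoffWeight_norm_le hsep hnorm hα₀ hα₂

end Lattice

section Kernel

variable {d : ℕ} [NeZero d]

theorem pker_nonneg (α : ℝ) (z : Fin d → ℤ) : 0 ≤ pker d α z := by
  have := znorm_nonneg z
  unfold pker
  positivity

theorem pker_zero (α : ℝ) : pker d α 0 = 0 := if_pos rfl

theorem pker_le (α : ℝ) (z : Fin d → ℤ) : pker d α z ≤ 2 * znorm d z ^ (-(d + α)) := by
  have hrpow : 0 ≤ znorm d z ^ (-(d + α)) := Real.rpow_nonneg (znorm_nonneg z) _
  have hcoef : (if 0 < z 0 then (2 : ℝ) else 0) + (if z 0 = 0 then 1 else 0) ≤ 2 := by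
    split_ifs <;> first | omega | norm_num
  rcases eq_or_ne z 0 with rfl | hz
  · rw [pker_zero]
    positivity
  · rw [pker, if_neg hz, mul_comm]
    exact mul_le_mul_of_nonneg_right hcoef hrpow

theorem pker_mul_min_le (α R : ℝ) (z : Fin d → ℤ) :
    pker d α z * min 1 ((znorm d z / R) ^ 2) ≤ 2 * cutoffWeight (d + α) R (znorm d z) := by
  rw [cutoffWeight, ← mul_assoc]
  exact mul_le_mul_of_nonneg_right (pker_le α z) (by positivity)

/-- The `i`-th coordinate of the truncated mean `Σ_{0<‖z‖≤R} z p(z)`. The sum has finite support. -/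
noncomputable def truncatedMean (d : ℕ) [NeZero d] (α R : ℝ) (i : Fin d) : ℝ :=
  ∑' z : Fin d → ℤ, if z ≠ 0 ∧ znorm d z ≤ R then (z i : ℝ) * pker d α z else 0

/-- The characteristic exponent `Σ_z p(z) (e^{i z·θ} - 1)` of the jump kernel. -/
noncomputable def charExponent (d : ℕ) [NeZero d] (α : ℝ) (θ : EuclideanSpace ℝ (Fin d)) : ℂ :=
  ∑' z : Fin d → ℤ,
    (pker d α z : ℂ) * (Complex.exp (Complex.I * ((∑ i, (z i : ℝ) * θ i : ℝ) : ℂ)) - 1)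

theorem pker_reflectCoord (α : ℝ) {i : Fin d} (hi : i ≠ 0) (z : Fin d → ℤ) :
    pker d α (reflectCoord i z) = pker d α z := by
  simp only [pker, reflectCoord_eq_zero_iff, znorm_reflectCoord, reflectCoord_apply_of_ne hi.symm]

theorem truncatedMean_eq_zero (α R : ℝ) {i : Fin d} (hi : i ≠ 0) : truncatedMean d α R i = 0 := by
  have h : truncatedMean d α R i = -truncatedMean d α R i := by
    conv_lhs => rw [truncatedMean, ← (reflectCoord i).tsum_eq]
    rw [truncatedMean, ← tsum_neg]
    refine tsum_congr fun z ↦ ?_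
    simp only [ne_eq, reflectCoord_eq_zero_iff, znorm_reflectCoord, pker_reflectCoord α hi,
      reflectCoord_apply_self, Int.cast_neg, neg_mul, neg_ite, neg_zero]
  exact self_eq_neg.mp h

theorem tsum_pker_mul_sum_eq (α R : ℝ) (θ : Fin d → ℝ) :
    ∑' z : Fin d → ℤ, (if z ≠ 0 ∧ znorm d z ≤ R then pker d α z * ∑ i, (z i : ℝ) * θ i else 0) =
      θ 0 * truncatedMean d α R 0 := by
  calc _ = ∑' z : Fin d → ℤ, ∑ i,
          θ i * (if z ≠ 0 ∧ znorm d z ≤ R then (z i : ℝ) * pker d α z else 0) := by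
        refine tsum_congr fun z ↦ ?_
        simp only [mul_ite, mul_zero, Finset.sum_ite_irrel, Finset.sum_const_zero, Finset.mul_sum]
        congr! 2
        ring
    _ = ∑ i, θ i * truncatedMean d α R i := by
        rw [Summable.tsum_finsetSum fun i _ ↦ (summable_ite_znorm_le R _).mul_left (θ i)]
        simp only [tsum_mul_left, truncatedMean]
    _ = θ 0 * truncatedMean d α R 0 :=
        Finset.sum_eq_single 0 (fun i _ hi ↦ by rw [truncatedMean_eq_zero α R hi, mul_zero])
          fun h ↦ absurd (Finset.mem_univ 0) h

theorem norm_pker_mul_exp_sub_ite_le (α : ℝ) {R : ℝ} (hR : 0 < R) (θ : EuclideanSpace ℝ (Fin d))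
    (z : Fin d → ℤ) :
    ‖(pker d α z : ℂ) * (Complex.exp (Complex.I * ((∑ i, (z i : ℝ) * θ i : ℝ) : ℂ)) - 1) -
        (if z ≠ 0 ∧ znorm d z ≤ R then
          Complex.I * ((pker d α z * ∑ i, (z i : ℝ) * θ i : ℝ) : ℂ) else 0)‖ ≤
      4 * (1 + (‖θ‖ * R) ^ 2) * cutoffWeight (d + α) R (znorm d z) := by
  set x : ℝ := ∑ i, (z i : ℝ) * θ i
  have hx : |x| ≤ ‖θ‖ * R * (znorm d z / R) := by
    rw [mul_assoc, mul_div_cancel₀ _ hR.ne', mul_comm]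
    exact abs_sum_mul_le_znorm_mul_norm z θ
  have hfactor : (pker d α z : ℂ) * (Complex.exp (Complex.I * (x : ℂ)) - 1) -
      (if z ≠ 0 ∧ znorm d z ≤ R then Complex.I * ((pker d α z * x : ℝ) : ℂ) else 0) =
      pker d α z * (Complex.exp (Complex.I * x) - 1 -
        (if znorm d z ≤ R then Complex.I * x else 0)) := by
    rcases eq_or_ne z 0 with rfl | hz
    · simp only [pker_zero, Complex.ofReal_zero, ne_eq, not_true, false_and, if_false, zero_mul,
        sub_zero]
    · simp only [hz, ne_eq, not_false_iff, true_and, Complex.ofReal_mul]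
      split_ifs <;> ring
  rw [hfactor, norm_mul, Complex.norm_real, Real.norm_of_nonneg (pker_nonneg α z)]
  calc _ ≤ pker d α z * (2 * (1 + (‖θ‖ * R) ^ 2) * min 1 ((znorm d z / R) ^ 2)) :=
        mul_le_mul_of_nonneg_left (norm_exp_I_mul_sub_one_sub_ite_le hR (znorm_nonneg z) hx)
          (pker_nonneg α z)
    _ = 2 * (1 + (‖θ‖ * R) ^ 2) * (pker d α z * min 1 ((znorm d z / R) ^ 2)) := by ring
    _ ≤ 2 * (1 + (‖θ‖ * R) ^ 2) * (2 * cutoffWeight (d + α) R (znorm d z)) := by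
        gcongr ?_ * ?_
        exact pker_mul_min_le α R z
    _ = 4 * (1 + (‖θ‖ * R) ^ 2) * cutoffWeight (d + α) R (znorm d z) := by ring

theorem exists_norm_charExponent_sub_le (d : ℕ) [NeZero d] {α : ℝ} (hα₀ : 0 < α) (hα₂ : α < 2) :
    ∃ C, ∀ R > 0, ∀ θ : EuclideanSpace ℝ (Fin d),
      ‖charExponent d α θ - Complex.I * ((θ 0 * truncatedMean d α R 0 : ℝ) : ℂ)‖ ≤
        C * (1 + (‖θ‖ * R) ^ 2) * R ^ (-α) := by
  obtain ⟨C, hC⟩ := exists_tsum_cutoffWeight_znorm_le d hα₀ hα₂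
  refine ⟨4 * C, fun R hR θ ↦ ?_⟩
  obtain ⟨hsummable, hsum_le⟩ := hC R hR
  have hmajorant := hsummable.mul_left (4 * (1 + (‖θ‖ * R) ^ 2))
  have hbound := norm_pker_mul_exp_sub_ite_le α hR θ
  have hlinear : Summable fun z : Fin d → ℤ ↦ if z ≠ 0 ∧ znorm d z ≤ R then
      Complex.I * ((pker d α z * ∑ i, (z i : ℝ) * θ i : ℝ) : ℂ) else 0 :=
    summable_ite_znorm_le R _
  have hfull := (Summable.of_norm_bounded hmajorant hbound).add hlinear
  simp only [sub_add_cancel] at hfull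
  have htsum_linear : ∑' z : Fin d → ℤ, (if z ≠ 0 ∧ znorm d z ≤ R then
      Complex.I * ((pker d α z * ∑ i, (z i : ℝ) * θ i : ℝ) : ℂ) else 0) =
      Complex.I * ((θ 0 * truncatedMean d α R 0 : ℝ) : ℂ) := by
    rw [← tsum_pker_mul_sum_eq, Complex.ofReal_tsum, ← tsum_mul_left]
    simp only [apply_ite Complex.ofReal, mul_ite, Complex.ofReal_zero, mul_zero]
  rw [charExponent, ← htsum_linear, ← hfull.tsum_sub hlinear]
  calc _ ≤ 4 * (1 + (‖θ‖ * R) ^ 2) * ∑' z : Fin d → ℤ, cutoffWeight (d + α) R (znorm d z) := by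
        rw [← tsum_mul_left]
        exact tsum_of_norm_bounded hmajorant.hasSum hbound
    _ ≤ 4 * (1 + (‖θ‖ * R) ^ 2) * (C * R ^ (-α)) := by gcongr
    _ = 4 * C * (1 + (‖θ‖ * R) ^ 2) * R ^ (-α) := by ring

theorem exists_norm_charExponent_inv_smul_sub_le {α : ℝ} (hα₀ : 0 < α) (hα₂ : α < 2)
    (v : EuclideanSpace ℝ (Fin d)) :
    ∃ C, ∀ R > 0, ‖charExponent d α (R⁻¹ • v) -
      Complex.I * ((R⁻¹ * v 0 * truncatedMean d α R 0 : ℝ) : ℂ)‖ ≤ C * R ^ (-α) := by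
  obtain ⟨C, hC⟩ := exists_norm_charExponent_sub_le d hα₀ hα₂
  refine ⟨C * (1 + ‖v‖ ^ 2), fun R hR ↦ ?_⟩
  have h := hC R hR (R⁻¹ • v)
  have hnorm : ‖R⁻¹ • v‖ * R = ‖v‖ := by
    rw [norm_smul, Real.norm_of_nonneg (inv_nonneg.mpr hR.le), mul_right_comm,
      inv_mul_cancel₀ hR.ne', one_mul]
  rwa [hnorm] at h

theorem tendsto_mul_charExponent (v : EuclideanSpace ℝ (Fin d)) {γ : ℝ}
    (hγ : Tendsto (fun N : ℕ ↦ (Real.log N)⁻¹ * truncatedMean d 1 N 0) atTop (𝓝 γ)) :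
    Tendsto (fun N : ℕ ↦ ((N / Real.log N : ℝ) : ℂ) * charExponent d 1 ((N : ℝ)⁻¹ • v)) atTop
      (𝓝 (Complex.I * (v 0 : ℂ) * (γ : ℂ))) := by
  obtain ⟨C, hC⟩ := exists_norm_charExponent_inv_smul_sub_le one_pos one_lt_two v
  have hmain : Tendsto (fun N : ℕ ↦
      Complex.I * v 0 * (((Real.log N)⁻¹ * truncatedMean d 1 N 0 : ℝ) : ℂ)) atTop
      (𝓝 (Complex.I * v 0 * γ)) :=
    ((Complex.continuous_ofReal.tendsto γ).comp hγ).const_mul _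
  have herror : Tendsto (fun N : ℕ ↦ C / Real.log N) atTop (𝓝 0) :=
    (Real.tendsto_log_atTop.comp tendsto_natCast_atTop_atTop).const_div_atTop C
  refine hmain.congr_dist (squeeze_zero' (.of_forall fun _ ↦ dist_nonneg) ?_ herror)
  filter_upwards [eventually_ge_atTop 2] with N hN
  have hN₀ : (0 : ℝ) < N := by positivity
  have hlog : 0 < Real.log N := Real.log_pos (by exact_mod_cast hN)
  have hscale : Complex.I * v 0 * (((Real.log N)⁻¹ * truncatedMean d 1 N 0 : ℝ) : ℂ) =
      ((N / Real.log N : ℝ) : ℂ) *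
        (Complex.I * (((N : ℝ)⁻¹ * v 0 * truncatedMean d 1 N 0 : ℝ) : ℂ)) := by
    have : (Real.log N)⁻¹ * v 0 * truncatedMean d 1 N 0 =
        N / Real.log N * ((N : ℝ)⁻¹ * v 0 * truncatedMean d 1 N 0) := by
      field_simp
    rw [mul_left_comm, ← Complex.ofReal_mul, ← this]
    push_cast
    ring
  rw [dist_comm, dist_eq_norm, hscale, ← mul_sub, norm_mul, Complex.norm_real,
    Real.norm_of_nonneg (by positivity)]
  calc _ ≤ N / Real.log N * (C * (N : ℝ) ^ (-1 : ℝ)) := by gcongr; exact hC N hN₀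
    _ = C / Real.log N := by rw [Real.rpow_neg_one]; field_simp

end Kernel

/-- for `α = 1`, if `γ_d = lim_{N→∞} (1/log N) Σ_{0<‖z‖≤N} z₁ p(z)` exists,
then `lim_{N→∞} (N/log N) Σ_{z≠0} p(z)(e^{iβ(z·a)/N} − 1) = iβ a₁ γ_d`. -/
theorem statement7 (d : ℕ) [NeZero d] (hd : 1 ≤ d) (γ : ℝ)
    (hγ : Filter.Tendsto
      (fun N : ℕ => (Real.log N)⁻¹ *
        ∑' z : Fin d → ℤ,
          (if z ≠ 0 ∧ znorm d z ≤ (N : ℝ) then (z 0 : ℝ) * pker d 1 z else 0))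
      Filter.atTop (nhds γ))
    (a : Fin d → ℝ) (β : ℝ) :
    Filter.Tendsto
      (fun N : ℕ => (((N : ℝ) / Real.log N : ℝ) : ℂ) *
        ∑' z : Fin d → ℤ, (pker d 1 z : ℂ) *
          (Complex.exp (Complex.I * (β : ℂ) * ((∑ i, (z i : ℝ) * a i : ℝ) : ℂ) / (N : ℂ)) - 1))
      Filter.atTop
      (nhds (Complex.I * (β : ℂ) * ((a 0 : ℝ) : ℂ) * ((γ : ℝ) : ℂ))) := by
  let v : EuclideanSpace ℝ (Fin d) := WithLp.toLp 2 fun i ↦ β * a i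
  have hphase (N : ℕ) (z : Fin d → ℤ) :
      Complex.I * (β : ℂ) * ((∑ i, (z i : ℝ) * a i : ℝ) : ℂ) / (N : ℂ) =
        Complex.I * ((∑ i, (z i : ℝ) * ((N : ℝ)⁻¹ • v) i : ℝ) : ℂ) := by
    have : ∑ i, (z i : ℝ) * ((N : ℝ)⁻¹ • v) i = β * (∑ i, (z i : ℝ) * a i) / N := by
      simp only [PiLp.smul_apply, smul_eq_mul, Finset.mul_sum, Finset.sum_div, v]
      exact Finset.sum_congr rfl fun i _ ↦ by ring
    rw [this]
    push_cast
    ring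
  have hlimit : Complex.I * (β : ℂ) * ((a 0 : ℝ) : ℂ) * ((γ : ℝ) : ℂ) = Complex.I * v 0 * γ := by
    simp only [v, Complex.ofReal_mul, mul_assoc]
  simp only [hphase, hlimit]
  exact tendsto_mul_charExponent v hγ
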